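/- For every integer t with 3 ≤ t ≤ 18 there exists a linear code over the field with 16 elements of length 63, dimension 2t, minimum distance at least 63 − (3t + 8) = 55 − 3t, and locality 2. In particular, taking t = 16 gives a linear code over the field with 16 elements of length 63, dimension 32, minimum distance at least 7, and locality 2, and taking t = 14 gives one of length 63, dimension 28, minimum distance at least 13, and locality 2. -/

import Mathlib

/-! On the Hermitian curve `y ^ 4 + y = x ^ 5` the functions `x` and `y` have poles of orders `4`
and `5` at infinity and no others, so a function `f` of pole order `v` has at most `v` zeros. This
can be seen by counting dimensions: the algebra of functions on the zero set of `f` is spanned by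
one monomial for each pole order in the Apéry set of `v`, because a monomial whose pole order lies
in `v + ⟨4, 5⟩` can be reduced modulo a multiple of `f`, and the Apéry set has at most one element
in each residue class modulo `v`.

The code is `V + y V`, where `V` is the space of functions of pole order at most `3 (t + 1)` that
are invariant under `(x, y) ↦ (ζ x, ζ ^ 2 y)`, with `ζ` a primitive cube root of unity. On each
orbit a codeword is a polynomial of degree at most one in `y`, so two of its values determine the
third. -/

open Module Submodule

section AperySet

/-- The Apéry set of `v` in a submonoid `Λ` of `ℕ`: the elements of `Λ` that are not in `v + Λ`. -/
def aperySet (Λ : AddSubmonoid ℕ) (v : ℕ) : Set ℕ := {n | n ∈ Λ ∧ ∀ s ∈ Λ, n ≠ v + s}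

variable {Λ : AddSubmonoid ℕ} {v : ℕ}

theorem mapsTo_mod_aperySet : Set.MapsTo (· % v) (aperySet Λ v) (Set.Iio v) := by
  rintro n ⟨hn, hnv⟩
  refine Nat.mod_lt n (Nat.pos_of_ne_zero ?_)
  rintro rfl
  exact hnv n hn (zero_add n).symm

theorem injOn_mod_aperySet (hv : v ∈ Λ) : Set.InjOn (· % v) (aperySet Λ v) := by
  intro m hm n hn hmod
  wlog hle : m ≤ n generalizing m n
  · exact (this hn hm hmod.symm (le_of_not_ge hle)).symm
  obtain ⟨k, hk⟩ := (Nat.modEq_iff_dvd' hle).1 hmod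
  rcases k with - | k
  · omega
  · refine absurd ?_ (hn.2 (m + k * v) (Λ.add_mem hm.1 (Λ.nsmul_mem hv k)))
    linarith [Nat.sub_add_cancel hle]

theorem finite_aperySet (hv : v ∈ Λ) : (aperySet Λ v).Finite :=
  Set.Finite.of_injOn mapsTo_mod_aperySet (injOn_mod_aperySet hv) (Set.finite_Iio v)

theorem ncard_aperySet_le (hv : v ∈ Λ) : (aperySet Λ v).ncard ≤ v := by
  simpa using Set.ncard_le_ncard_of_injOn _ mapsTo_mod_aperySet (injOn_mod_aperySet hv)
    (Set.finite_Iio v)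

end AperySet

section WeightFiltration

variable (F : Type*) {A A' : Type*} [Field F] [CommRing A] [Algebra F A] [CommRing A']
  [Algebra F A'] (a b : ℕ) (X Y : A)

/-- The span of the monomials `X ^ i * Y ^ j` of weight less than `n`, where `X` has weight `a`
and `Y` has weight `b`. On a curve where `X` and `Y` have poles of orders `a` and `b` at a
single point, these are the polynomials in `X` and `Y` of pole order less than `n`. -/
def weightLT (n : ℕ) : Submodule F A := span F {f | ∃ i j, i * a + j * b < n ∧ X ^ i * Y ^ j = f}

variable {F a b X Y} {i j n : ℕ}

theorem monomial_mem_weightLT (h : i * a + j * b < n) : X ^ i * Y ^ j ∈ weightLT F a b X Y n :=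
  subset_span ⟨i, j, h, rfl⟩

theorem monomial_mul_mem_weightLT {w : ℕ} {f : A} (hw : i * a + j * b + n ≤ w)
    (hf : f ∈ weightLT F a b X Y n) : X ^ i * Y ^ j * f ∈ weightLT F a b X Y w := by
  suffices weightLT F a b X Y n ≤
      (weightLT F a b X Y w).comap (LinearMap.mulLeft F (X ^ i * Y ^ j)) from this hf
  refine span_le.2 ?_
  rintro _ ⟨k, l, hkl, rfl⟩
  have hprod : X ^ i * Y ^ j * (X ^ k * Y ^ l) = X ^ (i + k) * Y ^ (j + l) := by ring
  simp only [SetLike.mem_coe, mem_comap, LinearMap.mulLeft_apply, hprod]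
  exact monomial_mem_weightLT (by linarith)

theorem map_mem_weightLT {f : A} (φ : A →ₐ[F] A') (hf : f ∈ weightLT F a b X Y n) :
    φ f ∈ weightLT F a b (φ X) (φ Y) n := by
  suffices weightLT F a b X Y n ≤
      (weightLT F a b (φ X) (φ Y) n).comap φ.toLinearMap from this hf
  refine span_le.2 ?_
  rintro _ ⟨k, l, hkl, rfl⟩
  simpa using monomial_mem_weightLT (F := F) hkl

theorem pow_sub_pow_mem_weightLT (hXY : Y ^ a - X ^ b ∈ weightLT F a b X Y (b * a)) (k : ℕ) :
    Y ^ (k * a) - X ^ (k * b) ∈ weightLT F a b X Y (k * b * a) := by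
  induction k with
  | zero => simp
  | succ k ih =>
    have hsplit : Y ^ ((k + 1) * a) - X ^ ((k + 1) * b) =
        X ^ 0 * Y ^ a * (Y ^ (k * a) - X ^ (k * b)) + X ^ (k * b) * Y ^ 0 * (Y ^ a - X ^ b) := by
      ring
    rw [hsplit]
    exact add_mem (monomial_mul_mem_weightLT (by linarith) ih)
      (monomial_mul_mem_weightLT (by linarith) hXY)

variable (F a b X Y) in
/-- The pairs `X`, `Y` satisfying the equation of a `C_ab` curve: `Y ^ a = X ^ b` up to terms of
lower weight, with `a` and `b` coprime. -/
structure IsCabPair : Prop where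
  pos : 0 < a
  coprime : a.Coprime b
  pow_sub_pow_mem : Y ^ a - X ^ b ∈ weightLT F a b X Y (b * a)

theorem IsCabPair.map (h : IsCabPair F a b X Y) (φ : A →ₐ[F] A') :
    IsCabPair F a b (φ X) (φ Y) :=
  ⟨h.pos, h.coprime, by simpa using map_mem_weightLT φ h.pow_sub_pow_mem⟩

theorem IsCabPair.monomial_sub_monomial_mem_weightLT (hXY : IsCabPair F a b X Y) {i' j' : ℕ}
    (h : i * a + j * b = n) (h' : i' * a + j' * b = n) :
    X ^ i * Y ^ j - X ^ i' * Y ^ j' ∈ weightLT F a b X Y n := by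
  wlog hj : j' ≤ j generalizing i j i' j'
  · rw [← neg_sub]
    exact neg_mem (this h' h (le_of_not_ge hj))
  obtain ⟨d, rfl⟩ := Nat.exists_eq_add_of_le hj
  have hi : i' * a = i * a + d * b := by linarith
  obtain ⟨k, rfl⟩ : a ∣ d := hXY.coprime.dvd_of_dvd_mul_right
    ((Nat.dvd_add_right (dvd_mul_left a i)).1 (hi ▸ dvd_mul_left a i'))
  obtain rfl : i' = i + k * b := Nat.eq_of_mul_eq_mul_right hXY.pos (by linarith)
  have hsplit : X ^ i * Y ^ (j' + a * k) - X ^ (i + k * b) * Y ^ j' =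
      X ^ i * Y ^ j' * (Y ^ (k * a) - X ^ (k * b)) := by ring
  rw [hsplit]
  exact monomial_mul_mem_weightLT (by linarith) (pow_sub_pow_mem_weightLT hXY.pow_sub_pow_mem k)

theorem IsCabPair.monomial_mem_of_forall_aperySet (hXY : IsCabPair F a b X Y) {i₀ j₀ : ℕ}
    (h₀ : X ^ i₀ * Y ^ j₀ ∈ weightLT F a b X Y (i₀ * a + j₀ * b)) {B : Submodule F A}
    (hB : ∀ n ∈ aperySet (AddSubmonoid.closure {a, b}) (i₀ * a + j₀ * b),
      ∃ i j, i * a + j * b = n ∧ X ^ i * Y ^ j ∈ B) (h : i * a + j * b = n) :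
    X ^ i * Y ^ j ∈ B := by
  induction n using Nat.strong_induction_on generalizing i j with
  | _ n ih =>
  have hlow : weightLT F a b X Y n ≤ B := by
    refine span_le.2 ?_
    rintro _ ⟨k, l, hkl, rfl⟩
    exact ih _ hkl rfl
  have hmove {k l : ℕ} (hkl : k * a + l * b = n) (hB : X ^ k * Y ^ l ∈ B) : X ^ i * Y ^ j ∈ B :=
    (B.sub_mem_iff_left hB).1 (hlow (hXY.monomial_sub_monomial_mem_weightLT h hkl))
  by_cases hn : n ∈ aperySet (AddSubmonoid.closure {a, b}) (i₀ * a + j₀ * b)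
  · obtain ⟨k, l, hkl, hmem⟩ := hB n hn
    exact hmove hkl hmem
  · have hnΛ : n ∈ AddSubmonoid.closure {a, b} :=
      (AddSubmonoid.mem_closure_pair a b n).2 ⟨i, j, by simpa using h⟩
    obtain ⟨s, hs, hns⟩ : ∃ s ∈ AddSubmonoid.closure {a, b}, n = i₀ * a + j₀ * b + s := by
      simpa [aperySet, hnΛ] using hn
    obtain ⟨k, l, hkl⟩ := (AddSubmonoid.mem_closure_pair a b s).1 hs
    simp only [smul_eq_mul] at hkl
    have hprod : X ^ (k + i₀) * Y ^ (l + j₀) = X ^ k * Y ^ l * (X ^ i₀ * Y ^ j₀) := by ring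
    refine hmove (k := k + i₀) (l := l + j₀) (by linarith) (hlow ?_)
    rw [hprod]
    exact monomial_mul_mem_weightLT (by linarith) h₀

theorem IsCabPair.finrank_le_of_monomial_mem_weightLT (hXY : IsCabPair F a b X Y)
    (hgen : Algebra.adjoin F {X, Y} = ⊤)
    (h : X ^ i * Y ^ j ∈ weightLT F a b X Y (i * a + j * b)) : finrank F A ≤ i * a + j * b := by
  set Λ := AddSubmonoid.closure {a, b}
  set v := i * a + j * b
  have hv : v ∈ Λ := (AddSubmonoid.mem_closure_pair a b v).2 ⟨i, j, rfl⟩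
  have hrep : ∀ n ∈ aperySet Λ v, ∃ k l, k * a + l * b = n := fun n hn ↦
    (AddSubmonoid.mem_closure_pair a b n).1 hn.1
  choose! p q hpq using hrep
  set M : Set A := (fun n ↦ X ^ p n * Y ^ q n) '' aperySet Λ v
  have hM : M.Finite := (finite_aperySet hv).image _
  have hspan : span F M = ⊤ := by
    rw [eq_top_iff, ← Algebra.top_toSubmodule, ← hgen, Algebra.adjoin_eq_span, span_le]
    intro f hf
    obtain ⟨k, l, rfl⟩ := (Submonoid.mem_closure_pair X Y f).1 hf
    exact hXY.monomial_mem_of_forall_aperySet h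
      (fun n hn ↦ ⟨p n, q n, hpq n hn, subset_span (Set.mem_image_of_mem _ hn)⟩) rfl
  calc finrank F A = finrank F (span F M) := by rw [hspan, finrank_top]
    _ ≤ M.ncard := by
      have := hM.fintype
      rw [Set.ncard_eq_toFinset_card']
      exact finrank_span_le_card M
    _ ≤ (aperySet Λ v).ncard := Set.ncard_image_le (finite_aperySet hv)
    _ ≤ v := ncard_aperySet_le hv

theorem isCabPair_of_hermitian {q : ℕ} (hq : 1 < q) (hXY : Y ^ q + Y = X ^ (q + 1)) :
    IsCabPair F q (q + 1) X Y where
  pos := by omega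
  coprime := by simp
  pow_sub_pow_mem := by
    have hlower : Y ^ q - X ^ (q + 1) = -(X ^ 0 * Y ^ 1) := by linear_combination hXY
    rw [hlower]
    exact neg_mem (monomial_mem_weightLT (by nlinarith))

end WeightFiltration

section Evaluation

variable {F ι : Type*} [Field F] [Finite ι]

theorem subalgebra_eq_top_of_separatesPoints {S : Subalgebra F (ι → F)}
    (hS : (S : Set (ι → F)).SeparatesPoints) : S = ⊤ := by
  classical
  have := Fintype.ofFinite ι
  have hsep (i j : ι) (hij : i ≠ j) : ∃ g ∈ S, g i = 1 ∧ g j = 0 := by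
    obtain ⟨f, hf, hfij⟩ := hS hij
    refine ⟨(f i - f j)⁻¹ • (f - algebraMap F _ (f j)),
      S.smul_mem (S.sub_mem hf (S.algebraMap_mem _)) _, ?_, by simp⟩
    simp [inv_mul_cancel₀ (sub_ne_zero.2 hfij)]
  choose! g hgS hg₁ hg₀ using hsep
  have hsingle (i : ι) : Pi.single i 1 ∈ S := by
    have hprod : Pi.single i 1 = ∏ j ∈ Finset.univ.erase i, g i j := by
      ext k
      rw [Finset.prod_apply]
      obtain rfl | hki := eq_or_ne k i
      · rw [Pi.single_eq_same]
        exact (Finset.prod_eq_one fun j hj ↦ hg₁ _ j (Finset.ne_of_mem_erase hj).symm).symm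
      · rw [Pi.single_eq_of_ne hki]
        have hk : k ∈ Finset.univ.erase i := Finset.mem_erase.2 ⟨hki, Finset.mem_univ k⟩
        exact (Finset.prod_eq_zero (f := fun j ↦ g i j k) hk (hg₀ i k hki.symm)).symm
    rw [hprod]
    exact S.prod_mem fun j hj ↦ hgS i j (Finset.ne_of_mem_erase hj).symm
  refine eq_top_iff.2 fun f _ ↦ ?_
  rw [pi_eq_sum_univ' f]
  exact S.sum_mem fun i _ ↦ S.smul_mem (hsingle i) (f i)

theorem adjoin_pair_eq_top {X Y : ι → F} (hinj : Function.Injective fun i ↦ (X i, Y i)) :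
    Algebra.adjoin F {X, Y} = ⊤ := by
  refine subalgebra_eq_top_of_separatesPoints fun i j hij ↦ ?_
  by_cases hX : X i = X j
  · exact ⟨Y, Algebra.subset_adjoin (by simp), fun hY ↦ hij (hinj (Prod.ext hX hY))⟩
  · exact ⟨X, Algebra.subset_adjoin (by simp), hX⟩

variable {a b : ℕ} {X Y : ι → F}

theorem IsCabPair.card_zeros_le (hXY : IsCabPair F a b X Y)
    (hinj : Function.Injective fun i ↦ (X i, Y i)) {c : F} (hc : c ≠ 0) {p q : ℕ} {f : ι → F}
    (hf : f - c • (X ^ p * Y ^ q) ∈ weightLT F a b X Y (p * a + q * b)) :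
    Nat.card {i // f i = 0} ≤ p * a + q * b := by
  let Z := {i // f i = 0}
  let res : (ι → F) →ₐ[F] (Z → F) := AlgHom.pi fun i ↦ Pi.evalAlgHom F _ i.1
  have hinjZ : Function.Injective fun i : Z ↦ (res X i, res Y i) :=
    hinj.comp Subtype.val_injective
  have hres : res f = 0 := funext Subtype.property
  have hlead : res X ^ p * res Y ^ q ∈ weightLT F a b (res X) (res Y) (p * a + q * b) := by
    have := map_mem_weightLT res hf
    rwa [map_sub, hres, zero_sub, neg_mem_iff, map_smul, Submodule.smul_mem_iff _ hc, map_mul,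
      map_pow, map_pow] at this
  have := Fintype.ofFinite Z
  calc Nat.card Z = finrank F (Z → F) := by
        rw [finrank_fintype_fun_eq_card, Nat.card_eq_fintype_card]
    _ ≤ p * a + q * b := (hXY.map res).finrank_le_of_monomial_mem_weightLT
        (adjoin_pair_eq_top hinjZ) hlead

variable {κ : Type*} {p q : κ → ℕ} {m : ℕ}

theorem IsCabPair.card_zeros_sum_le [Fintype κ] (hXY : IsCabPair F a b X Y)
    (hinj : Function.Injective fun i ↦ (X i, Y i))
    (hpq : Function.Injective fun k ↦ p k * a + q k * b)
    (hm : ∀ k, p k * a + q k * b ≤ m) {c : κ → F} (hc : c ≠ 0) :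
    Nat.card {i // (∑ k, c k • (X ^ p k * Y ^ q k)) i = 0} ≤ m := by
  classical
  obtain ⟨k₀, hk₀⟩ := Function.ne_iff.1 hc
  obtain ⟨k, hk, hmax⟩ := Finset.exists_max_image {k | c k ≠ 0} (fun k ↦ p k * a + q k * b)
    ⟨k₀, by simpa using hk₀⟩
  simp only [Finset.mem_filter_univ] at hk hmax
  refine (hXY.card_zeros_le hinj hk ?_).trans (hm k)
  rw [← Finset.add_sum_erase _ _ (Finset.mem_univ k), add_sub_cancel_left]
  refine sum_mem fun l hl ↦ ?_
  obtain hcl | hcl := eq_or_ne (c l) 0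
  · simp [hcl]
  · have hlk : p l * a + q l * b ≠ p k * a + q k * b := hpq.ne (Finset.ne_of_mem_erase hl)
    exact smul_mem _ _ (monomial_mem_weightLT (lt_of_le_of_ne (hmax l hcl) hlk))

theorem IsCabPair.linearIndependent_monomials [Finite κ] (hXY : IsCabPair F a b X Y)
    (hinj : Function.Injective fun i ↦ (X i, Y i))
    (hpq : Function.Injective fun k ↦ p k * a + q k * b)
    (hm : ∀ k, p k * a + q k * b ≤ m) (hlt : m < Nat.card ι) :
    LinearIndependent F fun k ↦ X ^ p k * Y ^ q k := by
  have := Fintype.ofFinite κ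
  rw [Fintype.linearIndependent_iff]
  intro c hsum
  by_contra! hc
  have hzeros := hXY.card_zeros_sum_le hinj hpq hm (Function.ne_iff.2 hc)
  rw [hsum, Nat.card_congr (Equiv.subtypeUnivEquiv fun _ ↦ Pi.zero_apply _)] at hzeros
  exact hlt.not_ge hzeros

theorem IsCabPair.card_sub_le_card_support [Finite κ] (hXY : IsCabPair F a b X Y)
    (hinj : Function.Injective fun i ↦ (X i, Y i))
    (hpq : Function.Injective fun k ↦ p k * a + q k * b)
    (hm : ∀ k, p k * a + q k * b ≤ m) {f : ι → F}
    (hf : f ∈ span F (Set.range fun k ↦ X ^ p k * Y ^ q k)) (hf₀ : f ≠ 0) :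
    Nat.card ι - m ≤ Nat.card {i // f i ≠ 0} := by
  classical
  have := Fintype.ofFinite ι
  have := Fintype.ofFinite κ
  obtain ⟨c, rfl⟩ := (mem_span_range_iff_exists_fun F).1 hf
  have hc : c ≠ 0 := by
    rintro rfl
    simp at hf₀
  have hzeros := hXY.card_zeros_sum_le hinj hpq hm hc
  rw [Nat.card_eq_fintype_card] at hzeros
  rw [Nat.card_eq_fintype_card, Nat.card_eq_fintype_card, Fintype.card_subtype_compl]
  exact Nat.sub_le_sub_left hzeros _

end Evaluation

section LocalRecovery

variable {F ι : Type*} [Field F]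

/-- Locality `r` of a linear code: every coordinate of a codeword is determined by at most `r`
others. -/
def HasLocality (C : Submodule F (ι → F)) (r : ℕ) : Prop :=
  ∀ i, ∃ I : Finset ι, i ∉ I ∧ I.card ≤ r ∧ ∀ x ∈ C, ∀ y ∈ C, (∀ j ∈ I, x j = y j) → x i = y i

/-- The functions on `ι` that are invariant under `σ`, the functions on the quotient by `σ`. -/
def invariants (F : Type*) [Field F] (σ : ι → ι) : Submodule F (ι → F) :=
  LinearMap.eqLocus (LinearMap.funLeft F F σ) LinearMap.id

variable {σ : ι → ι}

theorem apply_eq_of_mem_invariants {f : ι → F} (hf : f ∈ invariants F σ) (i : ι) :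
    f (σ i) = f i :=
  congrFun hf i

theorem hasLocality_two_of_le_invariants_sup {Y : ι → F} {C : Submodule F (ι → F)}
    (hC : C ≤ invariants F σ ⊔ (invariants F σ).map (LinearMap.mulLeft F Y))
    (hY : ∀ i, Y (σ i) ≠ Y i) (hσσ : ∀ i, σ (σ i) ≠ i) :
    HasLocality C 2 := by
  classical
  intro i
  have hσ : i ≠ σ i := fun h ↦ hY i (congrArg Y h.symm)
  refine ⟨{σ i, σ (σ i)}, by simp [hσ, (hσσ i).symm], Finset.card_le_two, ?_⟩
  intro x hx y hy hxy
  obtain ⟨f, hf, _, ⟨g, hg, rfl⟩, hfg⟩ := mem_sup.1 (hC (sub_mem hx hy))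
  have hval (k : ι) : f k + Y k * g k = x k - y k := congrFun hfg k
  have h₁ : f i + Y (σ i) * g i = 0 := by
    rw [← apply_eq_of_mem_invariants hf, ← apply_eq_of_mem_invariants hg, hval,
      hxy _ (by simp), sub_self]
  have h₂ : f i + Y (σ (σ i)) * g i = 0 := by
    rw [← apply_eq_of_mem_invariants hf, ← apply_eq_of_mem_invariants hg,
      ← apply_eq_of_mem_invariants hf, ← apply_eq_of_mem_invariants hg, hval,
      hxy _ (by simp), sub_self]
  have hgi : g i = 0 := by
    have : (Y (σ (σ i)) - Y (σ i)) * g i = 0 := by linear_combination h₂ - h₁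
    exact (mul_eq_zero.1 this).resolve_left (sub_ne_zero.2 (hY _))
  have hfi : f i = 0 := by simpa [hgi] using h₁
  exact sub_eq_zero.1 (by simp [← hval, hfi, hgi])

end LocalRecovery

section HermitianPoints

variable {K : Type*} [Field K]

theorem card_filter_pow_add_mul_eq_le [Fintype K] [DecidableEq K] {q : ℕ} (hq : 1 < q) (d c : K) :
    Finset.card {y : K | y ^ q + d * y = c} ≤ q := by
  open Polynomial in
  let P : K[X] := X ^ q + C d * X - C c
  have hdeg : P.natDegree = q := by
    unfold P
    compute_degree!
    · simp [hq.ne', (zero_lt_one.trans hq).ne']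
    all_goals omega
  have hP : P ≠ 0 := by
    rintro h
    simp [h] at hdeg
    omega
  refine (card_le_degree_of_subset_roots fun y hy ↦ ?_).trans hdeg.le
  rw [Finset.mem_val, Finset.mem_filter_univ] at hy
  simp [mem_roots hP, P, hy]

/-- Each fibre of `y ↦ y ^ q + y` has at most `q` elements, and so does its image, which lies in
the fixed field of `q`-Frobenius; as `K` has `q ^ 2` elements, all these bounds are attained. -/
theorem card_filter_pow_add_eq [Fintype K] [DecidableEq K] {p n : ℕ} [Fact p.Prime]
    (hK : Fintype.card K = (p ^ n) ^ 2) {c : K} (hc : c ^ p ^ n = c) :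
    Finset.card {y : K | y ^ p ^ n + y = c} = p ^ n := by
  have : CharP K p := charP_of_card_eq_prime_pow (hK.trans (pow_mul p n 2).symm)
  set q := p ^ n
  have hq : 1 < q := (one_lt_sq_iff₀ (Nat.zero_le q)).1 (hK ▸ Fintype.one_lt_card)
  let fixed : Finset K := {u | u ^ q = u}
  have hfixed : fixed.card ≤ q := by
    simpa [fixed, ← sub_eq_add_neg, sub_eq_zero] using card_filter_pow_add_mul_eq_le hq (-1 : K) 0
  have hfiber (u : K) : Finset.card {y : K | y ^ q + y = u} ≤ q := by
    simpa using card_filter_pow_add_mul_eq_le hq 1 u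
  have hmaps (y : K) : y ^ q + y ∈ fixed := by
    simp only [fixed, Finset.mem_filter_univ]
    rw [add_pow_char_pow, ← pow_mul, ← sq, ← hK, FiniteField.pow_card, add_comm]
  have hsum : ∑ u ∈ fixed, Finset.card {y : K | y ^ q + y = u} = q ^ 2 := by
    rw [← hK, ← Finset.card_univ]
    exact (Finset.card_eq_sum_card_fiberwise fun y _ ↦ hmaps y).symm
  have hsum_eq : ∑ u ∈ fixed, Finset.card {y : K | y ^ q + y = u} = ∑ _u ∈ fixed, q := by
    refine (Finset.sum_le_sum fun u _ ↦ hfiber u).antisymm ?_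
    rw [hsum, Finset.sum_const, smul_eq_mul, sq]
    exact Nat.mul_le_mul_right q hfixed
  exact (Finset.sum_eq_sum_iff_of_le fun u _ ↦ hfiber u).1 hsum_eq c (by simpa [fixed] using hc)

theorem card_hermitian_affine_points {p n : ℕ} [Fact p.Prime] (hK : Nat.card K = (p ^ n) ^ 2) :
    Nat.card {P : K × K // P.2 ^ p ^ n + P.2 = P.1 ^ (p ^ n + 1)} = (p ^ n) ^ 3 := by
  classical
  have : Finite K := Nat.finite_of_card_ne_zero
    (hK ▸ pow_ne_zero 2 (pow_ne_zero n (Fact.out : p.Prime).ne_zero))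
  have := Fintype.ofFinite K
  rw [Nat.card_eq_fintype_card] at hK
  have hnorm (x : K) : (x ^ (p ^ n + 1)) ^ p ^ n = x ^ (p ^ n + 1) := by
    rw [← pow_mul, add_mul, one_mul, ← sq, pow_add, ← hK, FiniteField.pow_card, ← pow_succ']
  have hfiber (x : K) : Nat.card {y : K // y ^ p ^ n + y = x ^ (p ^ n + 1)} = p ^ n := by
    rw [Nat.card_eq_fintype_card, Fintype.card_subtype, card_filter_pow_add_eq hK (hnorm x)]
  rw [Nat.card_congr (Equiv.subtypeProdEquivSigmaSubtype
    fun x y : K ↦ y ^ p ^ n + y = x ^ (p ^ n + 1)), Nat.card_sigma]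
  simp only [hfiber, Finset.sum_const, Finset.card_univ, hK, smul_eq_mul]
  ring

variable (K) in
/-- The affine `K`-points other than the origin of the Hermitian curve `y ^ 4 + y = x ^ 5`. The
origin is the only affine fixed point of `(x, y) ↦ (ζ x, ζ ^ 2 y)`. -/
abbrev HermitianPoint : Type _ := {P : K × K // P.2 ^ 4 + P.2 = P.1 ^ 5 ∧ P ≠ 0}

namespace HermitianPoint

theorem card_eq (hK : Nat.card K = 16) : Nat.card (HermitianPoint K) = 63 := by
  have hcard : Nat.card {P : K × K // P.2 ^ 4 + P.2 = P.1 ^ 5} = 64 :=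
    card_hermitian_affine_points (p := 2) (n := 2) hK
  have hset : {P : K × K | P.2 ^ 4 + P.2 = P.1 ^ 5 ∧ P ≠ 0} =
      {P : K × K | P.2 ^ 4 + P.2 = P.1 ^ 5} \ {0} := rfl
  change Set.ncard {P : K × K | P.2 ^ 4 + P.2 = P.1 ^ 5} = 64 at hcard
  change Set.ncard {P : K × K | P.2 ^ 4 + P.2 = P.1 ^ 5 ∧ P ≠ 0} = 63
  rw [hset, Set.ncard_sdiff_singleton_of_mem (by simp), hcard]

theorem snd_ne_zero (P : HermitianPoint K) : P.1.2 ≠ 0 := by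
  intro hy
  have hx : P.1.1 ^ 5 = 0 := by simp [← P.2.1, hy]
  exact P.2.2 (Prod.ext (eq_zero_of_pow_eq_zero hx) hy)

/-- The automorphism `(x, y) ↦ (ζ x, ζ ^ 2 y)` of the Hermitian curve, for `ζ` a primitive cube
root of unity. -/
def rotate {ζ : K} (hζ : IsPrimitiveRoot ζ 3) (P : HermitianPoint K) : HermitianPoint K :=
  ⟨(ζ * P.1.1, ζ ^ 2 * P.1.2),
    by linear_combination ζ ^ 2 * P.2.1 + (ζ ^ 5 + ζ ^ 2) * P.1.2 ^ 4 * hζ.pow_eq_one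
        - ζ ^ 2 * P.1.1 ^ 5 * hζ.pow_eq_one,
    fun h ↦ mul_ne_zero (pow_ne_zero 2 (hζ.ne_zero three_ne_zero)) P.snd_ne_zero
      (congrArg Prod.snd h)⟩

end HermitianPoint

theorem exists_isPrimitiveRoot_of_prime_dvd_card_sub_one {p : ℕ} [Fact p.Prime] [Finite K]
    (hp : p ∣ Nat.card K - 1) : ∃ ζ : K, IsPrimitiveRoot ζ p := by
  obtain ⟨u, hu⟩ := exists_prime_orderOf_dvd_card' (G := Kˣ) p (by rwa [Nat.card_units])
  exact ⟨u, IsPrimitiveRoot.coe_units_iff.2 (hu ▸ IsPrimitiveRoot.orderOf u)⟩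

end HermitianPoints

section HermitianCode

variable {F ι : Type*} [Field F]

/-- The numbers `k ≤ t + 1` in the Weierstrass semigroup `{0, 3, 4, …}` of the genus-2 quotient
curve at infinity: the invariant functions of pole order at most `3 * (t + 1)` have pole orders
`3 * k`. -/
def quotientPoleOrders (t : ℕ) : Finset ℕ := Finset.range (t + 2) \ {1, 2}

theorem card_quotientPoleOrders {t : ℕ} (ht : 1 ≤ t) : (quotientPoleOrders t).card = t := by
  have hsub : {1, 2} ⊆ Finset.range (t + 2) := by
    simp only [Finset.insert_subset_iff, Finset.singleton_subset_iff, Finset.mem_range]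
    omega
  rw [quotientPoleOrders, Finset.card_sdiff_of_subset hsub, Finset.card_range,
    Finset.card_pair (by norm_num), Nat.add_sub_cancel]

/-- The exponents `(i, j)` with `j < 4` of the monomial `x ^ i * y ^ j` of pole order `3 * k`. The
subtraction is exact unless `k` is one of the gaps `1` and `2`. -/
def invariantExponents (k : ℕ) : ℕ × ℕ := (3 * k / 4 - 3 * k % 4, 3 * k % 4)

theorem weight_invariantExponents {t k : ℕ} (hk : k ∈ quotientPoleOrders t) :
    (invariantExponents k).1 * 4 + (invariantExponents k).2 * 5 = 3 * k := by
  simp only [quotientPoleOrders, Finset.mem_sdiff, Finset.mem_insert, Finset.mem_singleton] at hk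
  have hcases : k = 0 ∨ k = 3 ∨ 4 ≤ k := by omega
  simp only [invariantExponents]
  omega

/-- The Hermitian code `V + Y V`, where `V` is the `t`-dimensional space of invariant functions of
pole order at most `3 * (t + 1)`. -/
def hermitianCode (X Y : ι → F) (t : ℕ) : Submodule F (ι → F) :=
  span F (Set.range fun k : quotientPoleOrders t × Fin 2 ↦
    X ^ (invariantExponents k.1).1 * Y ^ ((invariantExponents k.1).2 + k.2))

variable {X Y : ι → F} {t : ℕ}

theorem weight_generator_eq (k : quotientPoleOrders t × Fin 2) :
    (invariantExponents k.1).1 * 4 + ((invariantExponents k.1).2 + k.2) * 5 =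
      3 * k.1 + 5 * k.2 := by
  linarith [weight_invariantExponents k.1.2]

theorem weight_generator_le (k : quotientPoleOrders t × Fin 2) :
    (invariantExponents k.1).1 * 4 + ((invariantExponents k.1).2 + k.2) * 5 ≤ 3 * t + 8 := by
  rw [weight_generator_eq]
  have hk := k.1.2
  simp only [quotientPoleOrders, Finset.mem_sdiff, Finset.mem_range] at hk
  omega

theorem weight_generator_injective : Function.Injective fun k : quotientPoleOrders t × Fin 2 ↦
    (invariantExponents k.1).1 * 4 + ((invariantExponents k.1).2 + k.2) * 5 := by
  intro k l hkl
  simp only [weight_generator_eq] at hkl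
  ext <;> omega

theorem finrank_hermitianCode [Finite ι] (hXY : Y ^ 4 + Y = X ^ 5)
    (hinj : Function.Injective fun i ↦ (X i, Y i)) (ht : 1 ≤ t) (hcard : 3 * t + 8 < Nat.card ι) :
    finrank F (hermitianCode X Y t) = 2 * t := by
  have hli := (isCabPair_of_hermitian (F := F) (by norm_num) hXY).linearIndependent_monomials hinj
    weight_generator_injective weight_generator_le hcard
  rw [hermitianCode, finrank_span_eq_card hli, Fintype.card_prod, Fintype.card_coe,
    card_quotientPoleOrders ht, Fintype.card_fin, mul_comm]

theorem card_sub_le_card_support_hermitianCode [Finite ι] (hXY : Y ^ 4 + Y = X ^ 5)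
    (hinj : Function.Injective fun i ↦ (X i, Y i)) {f : ι → F} (hf : f ∈ hermitianCode X Y t)
    (hf₀ : f ≠ 0) : Nat.card ι - (3 * t + 8) ≤ Nat.card {i // f i ≠ 0} :=
  (isCabPair_of_hermitian (by norm_num) hXY).card_sub_le_card_support hinj
    weight_generator_injective weight_generator_le hf hf₀

variable {ζ : F} {σ : ι → ι}

theorem monomial_mem_invariants (hζ : ζ ^ 3 = 1) (hX : ∀ i, X (σ i) = ζ * X i)
    (hY : ∀ i, Y (σ i) = ζ ^ 2 * Y i) {p q : ℕ} (hpq : 3 ∣ p * 4 + q * 5) :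
    X ^ p * Y ^ q ∈ invariants F σ := by
  obtain ⟨m, hm⟩ : 3 ∣ p + 2 * q := by omega
  ext i
  calc X (σ i) ^ p * Y (σ i) ^ q = ζ ^ (p + 2 * q) * (X i ^ p * Y i ^ q) := by
        rw [hX, hY]
        ring
    _ = X i ^ p * Y i ^ q := by rw [hm, pow_mul, hζ, one_pow, one_mul]

theorem hermitianCode_le_invariants_sup (hζ : ζ ^ 3 = 1) (hX : ∀ i, X (σ i) = ζ * X i)
    (hY : ∀ i, Y (σ i) = ζ ^ 2 * Y i) :
    hermitianCode X Y t ≤ invariants F σ ⊔ (invariants F σ).map (LinearMap.mulLeft F Y) := by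
  refine span_le.2 ?_
  rintro _ ⟨⟨k, ε⟩, rfl⟩
  have hinv : X ^ (invariantExponents k).1 * Y ^ (invariantExponents k).2 ∈ invariants F σ :=
    monomial_mem_invariants hζ hX hY ⟨k, weight_invariantExponents k.2⟩
  fin_cases ε
  · exact mem_sup_left hinv
  · refine mem_sup_right ⟨_, hinv, ?_⟩
    simp only [LinearMap.mulLeft_apply]
    ring

theorem hasLocality_hermitianCode (hζ : IsPrimitiveRoot ζ 3) (hX : ∀ i, X (σ i) = ζ * X i)
    (hY : ∀ i, Y (σ i) = ζ ^ 2 * Y i) (hY₀ : ∀ i, Y i ≠ 0) :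
    HasLocality (hermitianCode X Y t) 2 := by
  refine hasLocality_two_of_le_invariants_sup
    (hermitianCode_le_invariants_sup hζ.pow_eq_one hX hY) (fun i h ↦ ?_) (fun i h ↦ ?_)
  · rw [hY, mul_eq_right₀ (hY₀ i)] at h
    exact hζ.pow_ne_one_of_pos_of_lt two_ne_zero (by norm_num) h
  · have hYi : ζ ^ 4 * Y i = Y i := by
      calc ζ ^ 4 * Y i = Y (σ (σ i)) := by rw [hY, hY]; ring
        _ = Y i := by rw [h]
    rw [mul_eq_right₀ (hY₀ i), pow_succ, hζ.pow_eq_one, one_mul] at hYi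
    exact hζ.ne_one (by norm_num) hYi

end HermitianCode

theorem exists_LRC_F16_length63_general {K F : Type*} [Field K] [Field F] [Algebra K F]
    (hK : Nat.card K = 16) {t : ℕ} (ht : 1 ≤ t) (ht' : t ≤ 18) :
    ∃ C : Submodule F (Fin 63 → F), finrank F C = 2 * t ∧
      (∀ x ∈ C, x ≠ 0 → 55 - 3 * t ≤ Nat.card {i // x i ≠ 0}) ∧ HasLocality C 2 := by
  have : Finite K := Nat.finite_of_card_ne_zero (by simp [hK])
  obtain ⟨ζ, hζ⟩ : ∃ ζ : K, IsPrimitiveRoot ζ 3 :=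
    exists_isPrimitiveRoot_of_prime_dvd_card_sub_one (by simp [hK])
  let φ := algebraMap K F
  let e : Fin 63 ≃ HermitianPoint K := (Finite.equivFinOfCardEq (HermitianPoint.card_eq hK)).symm
  let X : Fin 63 → F := fun i ↦ φ (e i).1.1
  let Y : Fin 63 → F := fun i ↦ φ (e i).1.2
  let σ : Fin 63 → Fin 63 := fun i ↦ e.symm ((e i).rotate hζ)
  have hXY : Y ^ 4 + Y = X ^ 5 := by
    ext i
    simpa [X, Y] using congrArg φ (e i).2.1
  have hinj : Function.Injective fun i ↦ (X i, Y i) :=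
    ((φ.injective.prodMap φ.injective).comp Subtype.val_injective).comp e.injective
  have hX (i) : X (σ i) = φ ζ * X i := by simp [X, σ, HermitianPoint.rotate]
  have hY (i) : Y (σ i) = φ ζ ^ 2 * Y i := by simp [Y, σ, HermitianPoint.rotate]
  have hlen : 3 * t + 8 < Nat.card (Fin 63) := by rw [Nat.card_fin]; omega
  refine ⟨hermitianCode X Y t, finrank_hermitianCode hXY hinj ht hlen, ?_, ?_⟩
  · intro x hx hx₀
    have hdist := card_sub_le_card_support_hermitianCode hXY hinj hx hx₀
    rw [Nat.card_fin] at hdist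
    omega
  · exact hasLocality_hermitianCode (hζ.map_of_injective φ.injective) hX hY
      fun i ↦ (map_ne_zero φ).2 (e i).snd_ne_zero

theorem exists_LRC_F16_length63 :
    ∀ t : ℕ, 3 ≤ t → t ≤ 18 →
      ∃ C : Submodule (GaloisField 2 4) (Fin 63 → GaloisField 2 4),
        Module.finrank (GaloisField 2 4) C = 2 * t ∧
        (∀ x : Fin 63 → GaloisField 2 4, x ∈ C → x ≠ 0 →
          55 - 3 * t ≤ Nat.card {i : Fin 63 // x i ≠ 0}) ∧
        (∀ i : Fin 63, ∃ I : Finset (Fin 63), i ∉ I ∧ I.card ≤ 2 ∧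
          ∀ x ∈ C, ∀ y ∈ C, (∀ j ∈ I, x j = y j) → x i = y i) := by
  intro t ht ht'
  exact exists_LRC_F16_length63_general (K := GaloisField 2 4)
    (GaloisField.card 2 4 four_ne_zero) (by omega) ht'
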